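/- Let $G$ be a group and suppose that the group ring $F[G]$ is stably finite for every finite field $F$. Then for every algebraically closed field $K$ of characteristic $0$, the group ring $K[G]$ is stably finite. -/

import Mathlib

/-!
Let `A * B = 1` over `K[G]`, and let `S ⊆ K` be the subring generated by the finitely many
coefficients occurring in the entries of `A` and `B`. Then `A` and `B` come from matrices over
`S[G]`, still with product `1` since `S[G] → K[G]` is injective. As `ℤ` is a Jacobson ring, so is the
finitely generated ring `S`; being a domain, it has zero Jacobson radical. If `B * A ≠ 1`, some
coefficient of an entry of `B * A - 1` is a nonzero element of `S`, hence it survives in `S ⧸ m` for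
some maximal ideal `m`. By Zariski's lemma over `ℤ` (`finite_of_field_finiteType_int`) the field
`S ⧸ m` is finite, and reducing modulo `m` contradicts stable finiteness of `(S ⧸ m)[G]`.
-/

/-- A ring `R` is stably finite if for every `d ≥ 1` and all `d × d` matrices `A B` over `R`,
`A * B = 1` implies `B * A = 1`. -/
def IsStablyFinite (R : Type*) [Ring R] : Prop :=
  ∀ d : ℕ, 1 ≤ d → ∀ A B : Matrix (Fin d) (Fin d) R, A * B = 1 → B * A = 1

theorem isJacobsonRing_int : IsJacobsonRing ℤ := by
  rw [isJacobsonRing_iff_prime_eq]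
  intro P hP
  by_cases hbot : P = ⊥
  · subst hbot
    refine le_antisymm (fun x hx => ?_) Ideal.le_jacobson
    rw [Ideal.mem_jacobson_bot] at hx
    -- `x * x + 1` is a positive unit of `ℤ`, hence equal to `1`.
    have h1 := hx x
    rw [Int.isUnit_iff] at h1
    rw [Ideal.mem_bot]
    rcases h1 with h1 | h1 <;> nlinarith
  · have := hP.isMaximal hbot
    exact Ideal.jacobson_eq_self_of_isMaximal

/-- Zariski's lemma over `ℤ`: a field that is finitely generated as a ring is finite. -/
theorem finite_of_field_finiteType_int (F : Type*) [Field F] [Algebra.FiniteType ℤ F] :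
    Finite F := by
  have := isJacobsonRing_int
  have hfin : Module.Finite ℤ F := finite_of_finite_type_of_isJacobsonRing ℤ F
  obtain ⟨p, hp⟩ := CharP.exists F
  rcases eq_or_ne p 0 with rfl | hp0
  · -- In characteristic `0`, `F` is an integral extension of `ℤ`, so `ℤ` would be a field.
    have := CharP.charP_to_charZero F
    exact absurd (isField_of_isIntegral_of_isField (R := ℤ) (S := F)
      (algebraMap ℤ F).injective_int (Field.toIsField F)) Int.not_isField
  · refine Module.finite_of_fg_torsion F ?_
    intro x
    refine ⟨⟨(p : ℤ), mem_nonZeroDivisors_of_ne_zero (by exact_mod_cast hp0)⟩, ?_⟩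
    change (p : ℤ) • x = 0
    simp [zsmul_eq_mul]

/-- In a finitely generated domain, a nonzero element survives in some finite field. -/
theorem exists_finite_field_map_ne_zero (S : Type*) [CommRing S] [IsDomain S]
    [Algebra.FiniteType ℤ S] (c : S) (hc : c ≠ 0) :
    ∃ (F : Type) (_ : Field F) (_ : Finite F) (f : S →+* F), f c ≠ 0 := by
  have := isJacobsonRing_int
  have hS : IsJacobsonRing S := isJacobsonRing_of_finiteType (A := ℤ)
  have hjac : (⊥ : Ideal S).jacobson = ⊥ :=
    isJacobsonRing_iff_prime_eq.mp hS ⊥ Ideal.isPrime_bot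
  have hcj : c ∉ (⊥ : Ideal S).jacobson := by rwa [hjac, Ideal.mem_bot]
  simp only [Ideal.jacobson, Ideal.mem_sInf, not_forall] at hcj
  obtain ⟨m, ⟨-, hm⟩, hcm⟩ := hcj
  let : Field (S ⧸ m) := Ideal.Quotient.field m
  have hft : Algebra.FiniteType ℤ (S ⧸ m) :=
    Algebra.FiniteType.of_surjective (Ideal.Quotient.mk m).toIntAlgHom Ideal.Quotient.mk_surjective
  have hfin : Finite (S ⧸ m) := @finite_of_field_finiteType_int (S ⧸ m) _ hft
  -- The quotient lives in the universe of `S`; being finite, it has a copy in `Type`.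
  refine ⟨Shrink.{0} (S ⧸ m), inferInstance, inferInstance,
    (Shrink.ringEquiv.{0} (S ⧸ m)).symm.toRingHom.comp (Ideal.Quotient.mk m), ?_⟩
  simpa [Ideal.Quotient.eq_zero_iff_mem] using hcm

theorem MonoidAlgebra.exists_mapRingHom_eq {R K G : Type*} [CommRing R] [CommRing K] [Group G]
    (f : R →+* K) (x : MonoidAlgebra K G) (hx : ∀ g, x.coeff g ∈ f.range) :
    ∃ y : MonoidAlgebra R G, MonoidAlgebra.mapRingHom G f y = x := by
  choose r hr using hx
  refine ⟨∑ g ∈ x.coeff.support, MonoidAlgebra.single g (r g), ?_⟩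
  rw [map_sum]
  simp only [MonoidAlgebra.coe_mapRingHom, MonoidAlgebra.map_single]
  exact (Finset.sum_congr rfl fun g _ => congrArg _ (hr g)).trans <|
    MonoidAlgebra.sum_coeff_single x

theorem stably_finite_char_zero_of_finite_fields_stably_finite
    {G : Type*} [Group G]
    (h : ∀ (F : Type) [Field F] [Finite F], IsStablyFinite (MonoidAlgebra F G)) :
    ∀ (K : Type*) [Field K] [IsAlgClosed K] [CharZero K],
      IsStablyFinite (MonoidAlgebra K G) := by
  intro K _ _ _ d hd A B hAB
  let T : Set K := ⋃ i, ⋃ j,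
    ((A i j).coeff '' (A i j).coeff.support ∪ (B i j).coeff '' (B i j).coeff.support)
  have hT : T.Finite := Set.finite_iUnion fun i => Set.finite_iUnion fun j =>
    ((Finset.finite_toSet _).image _).union ((Finset.finite_toSet _).image _)
  let S : Subalgebra ℤ K := Algebra.adjoin ℤ T
  have hS : Algebra.FiniteType ℤ S :=
    (Subalgebra.fg_iff_finiteType S).mp (Subalgebra.fg_def.mpr ⟨T, hT, rfl⟩)
  let ι : S →+* K := S.val.toRingHom
  have hι : Function.Injective ι := Subtype.val_injective
  have hA : ∀ i j g, (A i j).coeff g ∈ ι.range := by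
    intro i j g
    by_cases h0 : (A i j).coeff g = 0
    · rw [h0]; exact zero_mem _
    · exact ⟨⟨_, Algebra.subset_adjoin (Set.mem_iUnion.mpr ⟨i, Set.mem_iUnion.mpr ⟨j,
        Or.inl ⟨g, Finsupp.mem_support_iff.mpr h0, rfl⟩⟩⟩)⟩, rfl⟩
  have hB : ∀ i j g, (B i j).coeff g ∈ ι.range := by
    intro i j g
    by_cases h0 : (B i j).coeff g = 0
    · rw [h0]; exact zero_mem _
    · exact ⟨⟨_, Algebra.subset_adjoin (Set.mem_iUnion.mpr ⟨i, Set.mem_iUnion.mpr ⟨j,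
        Or.inr ⟨g, Finsupp.mem_support_iff.mpr h0, rfl⟩⟩⟩)⟩, rfl⟩
  choose A' hA' using fun i j => MonoidAlgebra.exists_mapRingHom_eq ι (A i j) (hA i j)
  choose B' hB' using fun i j => MonoidAlgebra.exists_mapRingHom_eq ι (B i j) (hB i j)
  let φ := (MonoidAlgebra.mapRingHom G ι).mapMatrix (m := Fin d)
  have hφA : φ (Matrix.of A') = A := by ext1 i j; exact hA' i j
  have hφB : φ (Matrix.of B') = B := by ext1 i j; exact hB' i j
  have hφ : Function.Injective φ := by
    intro M N hMN
    ext1 i j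
    refine MonoidAlgebra.ext (Finsupp.ext fun g => hι ?_)
    have := congrArg (fun X => (X i j).coeff g) hMN
    simpa [φ] using this
  have hAB' : Matrix.of A' * Matrix.of B' = 1 := hφ (by rw [map_mul, hφA, hφB, hAB, map_one])
  suffices hBA' : Matrix.of B' * Matrix.of A' = 1 by
    rw [← hφA, ← hφB, ← map_mul, hBA', map_one]
  ext1 i j
  refine MonoidAlgebra.ext (Finsupp.ext fun g => ?_)
  by_contra hne
  obtain ⟨F, _, _, f, hf⟩ := exists_finite_field_map_ne_zero S _ (sub_ne_zero.mpr hne)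
  let ψ := (MonoidAlgebra.mapRingHom G f).mapMatrix (m := Fin d)
  have key : ψ (Matrix.of B' * Matrix.of A') = ψ 1 := by
    rw [map_mul, map_one]
    exact h F d hd _ _ (by rw [← map_mul, hAB', map_one])
  apply hf
  rw [map_sub, sub_eq_zero]
  have := congrArg (fun X => (X i j).coeff g) key
  simpa only [ψ, RingHom.mapMatrix_apply, Matrix.map_apply, MonoidAlgebra.coeff_mapRingHom]
    using this
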